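/- Let T be a nontrivial finite rooted planar tree with n vertices whose root has principal subtrees T₁,…,T_k, where T_j has n_j vertices (so n = 1 + Σ_{j=1}^k n_j). Then σ(T) · ∏_{j=1}^k (n_j)! = (n−1)! · ∏_{j=1}^k σ(T_j). -/

import Mathlib

/-- A finite rooted planar tree: a single constructor taking the ordered list
of principal subtrees of the root. -/
inductive PTree : Type where
  | node : List PTree → PTree

namespace PTree

/-- The trivial tree, reduced to its root. -/
def triv : PTree := node []

/-- Whether a tree is trivial. -/
def isTriv : PTree → Bool
  | .node [] => true
  | _ => false

mutual
/-- `d(T)`: the number of leaves of a tree. -/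
def leaves : PTree → ℕ
  | .node [] => 1
  | .node (t :: ts) => leavesL (t :: ts)
def leavesL : List PTree → ℕ
  | [] => 0
  | t :: ts => leaves t + leavesL ts
end

mutual
/-- `d°(T)`: the number of internal vertices of a tree. -/
def ints : PTree → ℕ
  | .node [] => 0
  | .node (t :: ts) => 1 + intsL (t :: ts)
def intsL : List PTree → ℕ
  | [] => 0
  | t :: ts => ints t + intsL ts
end

mutual
/-- The number of vertices of a tree. -/
def verts : PTree → ℕ
  | .node ts => 1 + vertsL ts
def vertsL : List PTree → ℕ
  | [] => 0
  | t :: ts => verts t + vertsL ts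
end

/-- A tree is `k`-regular if every internal vertex has exactly `k` sons. -/
inductive Regular (k : ℕ) : PTree → Prop where
  | leaf : Regular k (.node [])
  | node (ts : List PTree) (hlen : ts.length = k) (h : ∀ t ∈ ts, Regular k t) :
      Regular k (.node ts)

end PTree
namespace PTree

/-- `IsVertex T p` means that the address `p` (a path: at each step, the index
of the son to follow) is a vertex of the tree `T`. -/
def IsVertex : PTree → List ℕ → Prop
  | _, [] => True
  | .node ts, i :: p => ∃ h : i < ts.length, IsVertex ts[i] p

/-- The vertex set of a finite rooted planar tree, partially ordered by
`v ≤ w` iff `v` lies on the path from the root to `w`, i.e. iff the address of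
`v` is a prefix of that of `w`. -/
def Vx (T : PTree) : Type := {p : List ℕ // IsVertex T p}

theorem isVertex_nil (T : PTree) : IsVertex T [] := by cases T; simp [IsVertex]

/-- The root of a tree, as a vertex. -/
def rootVx (T : PTree) : Vx T := ⟨[], isVertex_nil T⟩

/-- A morphism from the poset of vertices of `T` into a poset `P`:
an order-preserving map (the vertex order being the prefix order on addresses). -/
def IsMorph {T : PTree} {P : Type} [Preorder P] (μ : Vx T → P) : Prop :=
  ∀ v w : Vx T, v.val <+: w.val → μ v ≤ μ w

/-- A vertex is a leaf if it has no sons (not even a `0`-th one). -/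
def IsLeafVx {T : PTree} (v : Vx T) : Prop := ¬ IsVertex T (v.val ++ [0])

/-- `w` is a son of `v`. -/
def IsSon {T : PTree} (v w : Vx T) : Prop := ∃ i : ℕ, w.val = v.val ++ [i]

/-- The number of restricted morphisms from the vertex poset of `T` into the
chain `{1 < 2 < … < m}` (realized as `Fin m`): order-preserving maps sending
every leaf of `T` to the top element `m` (i.e. `m - 1` in `Fin m`). -/
noncomputable def restrCount (m : ℕ) (T : PTree) : ℕ :=
  Nat.card {μ : Vx T → Fin m //
    IsMorph μ ∧ ∀ v : Vx T, IsLeafVx v → (μ v : ℕ) = m - 1}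

/-- The number of all morphisms from the vertex poset of `T` into the chain
`{1 < 2 < … < m}` (realized as `Fin m`). -/
noncomputable def morphCount (m : ℕ) (T : PTree) : ℕ :=
  Nat.card {μ : Vx T → Fin m // IsMorph μ}

/-- `σ(T)`: the number of surjective morphisms from the vertex poset of `T`
(with `n` vertices) onto the chain `{1 < 2 < … < n}`. -/
noncomputable def surjCount (T : PTree) : ℕ :=
  Nat.card {μ : Vx T → Fin T.verts // IsMorph μ ∧ Function.Surjective μ}

end PTree

/-!
The vertices of `T` other than the root form the disjoint union of the vertex posets of the `T_j`,
and a surjective morphism onto the chain with `n` elements is a linear extension, which must send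
the root to the least element. So `σ(T)` counts the linear extensions of that disjoint union.

A labelling of a disjoint union of finite posets is monotone if and only if each of its blocks is,
and this depends only on the relative order of the labels inside the block. All relative orders
are equally frequent: permuting the labels within the blocks trades the relative orders of a given
labelling for prescribed ones. Hence a proportion `∏ σ(T_j) / (n_j)!` of the `(n - 1)!` labellings
is monotone.
-/

theorem card_equiv_fin (α : Type*) [Finite α] :
    Nat.card (α ≃ Fin (Nat.card α)) = (Nat.card α).factorial := by
  rw [← Nat.card_perm, Nat.card_congr ((Equiv.refl α).equivCongr (Finite.equivFin α))]

theorem card_subtype_fst {α β : Type*} (p : α → Prop) :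
    Nat.card {x : α × β // p x.1} = Nat.card {a // p a} * Nat.card β :=
  (Nat.card_congr Equiv.prodSubtypeFstEquivSubtypeProd).trans (Nat.card_prod _ _)

theorem card_subtype_snd {α β : Type*} (p : β → Prop) :
    Nat.card {x : α × β // p x.2} = Nat.card α * Nat.card {b // p b} := by
  rw [mul_comm, ← card_subtype_fst]
  exact Nat.card_congr ((Equiv.prodComm α β).subtypeEquiv fun _ => Iff.rfl)

section MonotoneBijections

variable {α β γ δ : Type*} [Preorder α] [Preorder β]

theorem card_monotone_equiv_congr [Preorder γ] [Preorder δ] (e : α ≃o γ) (f : β ≃o δ) :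
    Nat.card {g : α ≃ β // Monotone g} = Nat.card {g : γ ≃ δ // Monotone g} := by
  refine Nat.card_congr ((e.toEquiv.equivCongr f.toEquiv).subtypeEquiv fun g => ⟨fun hg => ?_,
    fun hg v w hvw => ?_⟩)
  · exact f.monotone.comp (hg.comp e.symm.monotone)
  · simpa [Equiv.equivCongr] using hg (e.monotone hvw)

theorem card_monotone_surjective [Finite α] [Finite β] (hcard : Nat.card α = Nat.card β) :
    Nat.card {f : α → β // Monotone f ∧ Function.Surjective f} =
      Nat.card {e : α ≃ β // Monotone e} := by
  refine (Nat.card_congr (Equiv.ofBijective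
    (fun e => ⟨e.1, e.2, e.1.surjective⟩) ⟨fun e e' h => ?_, fun ⟨f, hmono, hsurj⟩ => ?_⟩)).symm
  · exact Subtype.ext (Equiv.coe_fn_injective (congrArg Subtype.val h))
  · have hbij : Function.Bijective f := (Nat.bijective_iff_surjective_and_card f).2 ⟨hsurj, hcard⟩
    exact ⟨⟨Equiv.ofBijective f hbij, hmono⟩, rfl⟩

theorem card_monotone_equiv_withBot [PartialOrder γ] [OrderBot γ] :
    Nat.card {e : WithBot α ≃ γ // Monotone e} =
      Nat.card {e : α ≃ {c : γ // c ≠ ⊥} // Monotone e} := by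
  classical
  have monotone_iff (e : WithBot α ≃ γ) : Monotone e ↔ e ⊥ = ⊥ ∧ Monotone fun a : α => e a := by
    rw [WithBot.monotone_iff, and_comm]
    refine and_congr_left fun _ => ⟨fun h => ?_, fun h a => h ▸ bot_le⟩
    obtain ⟨x, hx⟩ := e.surjective ⊥
    cases x with
    | bot => exact hx
    | coe a => exact le_bot_iff.1 (hx ▸ h a)
  calc Nat.card {e : WithBot α ≃ γ // Monotone e}
      = Nat.card {e : WithBot α ≃ γ // e ⊥ = ⊥ ∧ Monotone fun a : α => e a} :=
        Nat.card_congr (Equiv.subtypeEquivRight monotone_iff)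
    _ = Nat.card {e : {e : WithBot α ≃ γ // e ⊥ = ⊥} // Monotone fun a : α => e.1 a} :=
        Nat.card_congr (Equiv.subtypeSubtypeEquivSubtypeInter _
          fun e : WithBot α ≃ γ => Monotone fun a : α => e a).symm
    _ = Nat.card {e : α ≃ {c : γ // c ≠ ⊥} // Monotone e} :=
        Nat.card_congr ((Equiv.optionSubtype ⊥).subtypeEquiv fun _ => Iff.rfl)

theorem monotone_sigma_iff {ι : Type*} {α : ι → Type*} [∀ i, Preorder (α i)]
    {f : (Σ i, α i) → β} : Monotone f ↔ ∀ i, Monotone fun a => f ⟨i, a⟩ := by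
  refine ⟨fun hf i a b hab => hf (Sigma.mk_le_mk_iff.2 hab), ?_⟩
  rintro hf _ _ ⟨i, a, b, hab⟩
  exact hf i hab

end MonotoneBijections

/-- The number of linear extensions of a finite poset `α`, a linear extension being encoded as an
order-preserving bijection from `α` onto the chain `Fin (Nat.card α)`. -/
noncomputable def numLinearExtensions (α : Type*) [Preorder α] : ℕ :=
  Nat.card {e : α ≃ Fin (Nat.card α) // Monotone e}

theorem card_monotone_equiv_eq_numLinearExtensions {α β : Type*} [Preorder α] [LinearOrder β]
    [Finite β] (hcard : Nat.card β = Nat.card α) :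
    Nat.card {e : α ≃ β // Monotone e} = numLinearExtensions α := by
  have := Fintype.ofFinite β
  have hcard' : Fintype.card β = Nat.card α := by rw [← hcard, Nat.card_eq_fintype_card]
  exact card_monotone_equiv_congr (.refl α) (Fintype.orderIsoFinOfCardEq β hcard').symm

theorem numLinearExtensions_congr {α β : Type*} [Preorder α] [Preorder β] (e : α ≃o β) :
    numLinearExtensions α = numLinearExtensions β :=
  card_monotone_equiv_congr e (Fin.castOrderIso (Nat.card_congr e.toEquiv))

theorem numLinearExtensions_withBot {α : Type*} [Preorder α] [Finite α] :
    numLinearExtensions (WithBot α) = numLinearExtensions α := by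
  have hcard : Nat.card (WithBot α) = Nat.card α + 1 := Finite.card_option
  rw [numLinearExtensions, hcard, card_monotone_equiv_withBot]
  exact card_monotone_equiv_eq_numLinearExtensions (by simp)

section Standardization

variable {α β : Type*} [Finite α] [LinearOrder β]

/-- The standardization of an injective labelling `f` of a finite set by a linear order: each
element is relabelled by the rank of its label. -/
noncomputable def standardization (f : α ↪ β) : α ≃ Fin (Nat.card α) :=
  letI := LinearOrder.lift' f f.injective
  letI := Fintype.ofFinite α
  (Fintype.orderIsoFinOfCardEq α Nat.card_eq_fintype_card.symm).symm.toEquiv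

theorem standardization_le_standardization_iff (f : α ↪ β) {a b : α} :
    standardization f a ≤ standardization f b ↔ f a ≤ f b :=
  letI := LinearOrder.lift' f f.injective
  letI := Fintype.ofFinite α
  (Fintype.orderIsoFinOfCardEq α Nat.card_eq_fintype_card.symm).symm.le_iff_le

theorem monotone_standardization_iff [Preorder α] (f : α ↪ β) :
    Monotone (standardization f) ↔ Monotone f :=
  forall₃_congr fun _ _ _ => standardization_le_standardization_iff f

theorem standardization_eq {f : α ↪ β} {s : α ≃ Fin (Nat.card α)}
    (h : ∀ a b, s a ≤ s b ↔ f a ≤ f b) : standardization f = s := by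
  let e : Fin (Nat.card α) ≃o Fin (Nat.card α) :=
    { toEquiv := s.symm.trans (standardization f)
      map_rel_iff' := by simp [standardization_le_standardization_iff, ← h] }
  ext a
  have : e (s a) = s a := by rw [Subsingleton.elim e (.refl _), OrderIso.refl_apply]
  simpa [e] using congrArg Fin.val this

end Standardization

section DisjointSum

variable {ι : Type*} {α : ι → Type*} {β : Type*} [∀ i, Finite (α i)] [LinearOrder β]

/-- The standardizations of the restrictions of a labelling of a disjoint union to its blocks. -/
noncomputable def blockStandardization (μ : (Σ i, α i) ≃ β) (i : ι) :
    α i ≃ Fin (Nat.card (α i)) :=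
  standardization ((Function.Embedding.sigmaMk i).trans μ.toEmbedding)

theorem blockStandardization_le_blockStandardization_iff (μ : (Σ i, α i) ≃ β) (i : ι) {a b : α i} :
    blockStandardization μ i a ≤ blockStandardization μ i b ↔ μ ⟨i, a⟩ ≤ μ ⟨i, b⟩ :=
  standardization_le_standardization_iff _

theorem monotone_iff_blockStandardization [∀ i, Preorder (α i)] (μ : (Σ i, α i) ≃ β) :
    Monotone μ ↔ ∀ i, Monotone (blockStandardization μ i) := by
  rw [monotone_sigma_iff]
  exact forall_congr' fun i => (monotone_standardization_iff
    ((Function.Embedding.sigmaMk i).trans μ.toEmbedding)).symm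

/-- Trades the block standardizations of a labelling `μ` of a disjoint union for given ranks `ν i`
on the blocks: `μ` is permuted inside each block so as to be ordered like `ν i`, and its former
block standardizations are returned in place of `ν`. -/
noncomputable def exchangeStandardizations
    (p : ((Σ i, α i) ≃ β) × ∀ i, α i ≃ Fin (Nat.card (α i))) :
    ((Σ i, α i) ≃ β) × ∀ i, α i ≃ Fin (Nat.card (α i)) :=
  ((Equiv.sigmaCongrRight fun i => (p.2 i).trans (blockStandardization p.1 i).symm).trans p.1,
    blockStandardization p.1)

theorem blockStandardization_exchangeStandardizations
    (p : ((Σ i, α i) ≃ β) × ∀ i, α i ≃ Fin (Nat.card (α i))) :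
    blockStandardization (exchangeStandardizations p).1 = p.2 := by
  funext i
  refine standardization_eq fun a b => ?_
  simp [exchangeStandardizations, ← blockStandardization_le_blockStandardization_iff]

theorem exchangeStandardizations_involutive :
    Function.Involutive (exchangeStandardizations (α := α) (β := β)) := by
  intro p
  have h := blockStandardization_exchangeStandardizations p
  refine Prod.ext (Equiv.ext fun ⟨i, a⟩ => ?_) h
  rw [exchangeStandardizations, h]
  simp [exchangeStandardizations]

theorem card_monotone_sigma_equiv_mul [∀ i, Preorder (α i)] :
    Nat.card {μ : (Σ i, α i) ≃ β // Monotone μ} * Nat.card (∀ i, α i ≃ Fin (Nat.card (α i))) =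
      Nat.card ((Σ i, α i) ≃ β) *
        Nat.card (∀ i, {ν : α i ≃ Fin (Nat.card (α i)) // Monotone ν}) := by
  let Labellings := (Σ i, α i) ≃ β
  let BlockRanks := ∀ i, α i ≃ Fin (Nat.card (α i))
  calc Nat.card {μ : Labellings // Monotone μ} * Nat.card BlockRanks
      = Nat.card {p : Labellings × BlockRanks // Monotone p.1} :=
        (card_subtype_fst _).symm
    _ = Nat.card {p : Labellings × BlockRanks // ∀ i, Monotone (p.2 i)} :=
        Nat.card_congr (exchangeStandardizations_involutive.toPerm.subtypeEquiv fun p =>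
          monotone_iff_blockStandardization p.1)
    _ = Nat.card Labellings * Nat.card {ν : BlockRanks // ∀ i, Monotone (ν i)} :=
        card_subtype_snd fun ν : BlockRanks => ∀ i, Monotone (ν i)
    _ = Nat.card Labellings * Nat.card (∀ i, {ν : α i ≃ Fin (Nat.card (α i)) // Monotone ν}) :=
        congrArg _ (Nat.card_congr (Equiv.subtypePiEquivPi
          (p := fun i (ν : α i ≃ Fin (Nat.card (α i))) => Monotone ν)))

theorem numLinearExtensions_sigma_mul [Fintype ι] [∀ i, Preorder (α i)] :
    numLinearExtensions (Σ i, α i) * ∏ i, (Nat.card (α i)).factorial =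
      (Nat.card (Σ i, α i)).factorial * ∏ i, numLinearExtensions (α i) := by
  have h := card_monotone_sigma_equiv_mul (α := α) (β := Fin (Nat.card (Σ i, α i)))
  simpa only [Nat.card_pi, card_equiv_fin, numLinearExtensions] using h

end DisjointSum

namespace PTree

theorem induction_on_subtrees {motive : PTree → Prop}
    (node : ∀ ts : List PTree, (∀ t ∈ ts, motive t) → motive (.node ts)) : ∀ T, motive T
  | .node ts => node ts fun t _ => induction_on_subtrees node t

instance (T : PTree) : PartialOrder (Vx T) where
  le v w := v.val <+: w.val
  le_refl v := List.prefix_refl v.val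
  le_trans _ _ _ := List.IsPrefix.trans
  le_antisymm _ _ hvw hwv := Subtype.ext (hvw.eq_of_length_le hwv.length_le)

theorem isMorph_iff_monotone {T : PTree} {P : Type} [Preorder P] {μ : Vx T → P} :
    IsMorph μ ↔ Monotone μ :=
  Iff.rfl

theorem subtreeVx_le_iff {ts : List PTree} {v w : Σ i : Fin ts.length, Vx ts[i.1]} :
    v ≤ w ↔ v.1.1 :: v.2.1 <+: w.1.1 :: w.2.1 := by
  obtain ⟨i, v⟩ := v
  obtain ⟨j, w⟩ := w
  rw [List.cons_prefix_cons]
  constructor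
  · rintro ⟨i, v, w, hvw⟩
    exact ⟨rfl, hvw⟩
  · rintro ⟨hij, hvw⟩
    obtain rfl := Fin.ext hij
    exact Sigma.mk_le_mk_iff.2 hvw

/-- The decomposition of a tree at its root: `⊥` corresponds to the root and `⟨i, v⟩` to the
vertex `v` of the `i`-th principal subtree. -/
def vxNodeOrderIso (ts : List PTree) :
    Vx (.node ts) ≃o WithBot (Σ i : Fin ts.length, Vx ts[i.1]) where
  toFun
    | ⟨[], _⟩ => ⊥
    | ⟨i :: p, h⟩ => ↑(⟨⟨i, h.1⟩, p, h.2⟩ : Σ i : Fin ts.length, Vx ts[i.1])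
  invFun
    | ⊥ => rootVx _
    | some v => ⟨v.1.1 :: v.2.1, v.1.2, v.2.2⟩
  left_inv := by rintro ⟨_ | ⟨i, p⟩, h⟩ <;> rfl
  right_inv := by rintro (_ | ⟨i, v⟩) <;> rfl
  map_rel_iff' := by
    rintro ⟨_ | ⟨i, p⟩, hv⟩ ⟨_ | ⟨j, q⟩, hw⟩
    · exact iff_of_true le_rfl le_rfl
    · exact iff_of_true bot_le (List.nil_prefix (l := j :: q))
    · exact iff_of_false (WithBot.not_coe_le_bot _) fun h =>
        List.cons_ne_nil i p (List.prefix_nil.1 h)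
    · exact WithBot.coe_le_coe.trans subtreeVx_le_iff

instance (T : PTree) : Finite (Vx T) := by
  induction T using induction_on_subtrees with
  | node ts ih =>
    have (i : Fin ts.length) : Finite (Vx ts[i.1]) := ih _ (List.getElem_mem i.2)
    have : Finite (WithBot (Σ i : Fin ts.length, Vx ts[i.1])) := inferInstanceAs (Finite (Option _))
    exact .of_equiv _ (vxNodeOrderIso ts).symm.toEquiv

theorem card_vx_node (ts : List PTree) :
    Nat.card (Vx (.node ts)) = Nat.card (Σ i : Fin ts.length, Vx ts[i.1]) + 1 :=
  (Nat.card_congr (vxNodeOrderIso ts).toEquiv).trans Finite.card_option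

theorem vertsL_eq_sum (ts : List PTree) : vertsL ts = (ts.map verts).sum := by
  induction ts with
  | nil => rfl
  | cons t ts ih => rw [vertsL, ih, List.map_cons, List.sum_cons]

theorem card_vx (T : PTree) : Nat.card (Vx T) = verts T := by
  induction T using induction_on_subtrees with
  | node ts ih =>
    have ih' (i : Fin ts.length) : Nat.card (Vx ts[i.1]) = verts ts[i.1] :=
      ih _ (List.getElem_mem i.2)
    rw [card_vx_node, Nat.card_sigma, verts, vertsL_eq_sum, add_comm]
    simp only [ih', Fin.sum_univ_fun_getElem]

theorem surjCount_eq_numLinearExtensions (T : PTree) :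
    surjCount T = numLinearExtensions (Vx T) := by
  have hcard : Nat.card (Fin (verts T)) = Nat.card (Vx T) := by rw [card_vx, Nat.card_fin]
  simp only [surjCount, isMorph_iff_monotone]
  rw [card_monotone_surjective hcard.symm, card_monotone_equiv_eq_numLinearExtensions hcard]

theorem surjCount_node (ts : List PTree) :
    surjCount (.node ts) = numLinearExtensions (Σ i : Fin ts.length, Vx ts[i.1]) := by
  rw [surjCount_eq_numLinearExtensions, numLinearExtensions_congr (vxNodeOrderIso ts),
    numLinearExtensions_withBot]

end PTree

/-- For a nontrivial finite rooted planar tree `T` with `n` vertices and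
principal subtrees `T₁, …, T_k` having `n₁, …, n_k` vertices, the number `σ(T)`
of surjective morphisms from `T` onto the chain `{1 < … < n}` satisfies
`σ(T) · ∏_j (n_j)! = (n-1)! · ∏_j σ(T_j)`. -/
theorem statement14 (ts : List PTree) (hne : ts ≠ []) :
    PTree.surjCount (.node ts) * (ts.map fun t => (PTree.verts t).factorial).prod =
      (PTree.verts (.node ts) - 1).factorial * (ts.map PTree.surjCount).prod := by
  have key := numLinearExtensions_sigma_mul (α := fun i : Fin ts.length => PTree.Vx ts[i.1])
  have hcard : PTree.verts (.node ts) - 1 = Nat.card (Σ i : Fin ts.length, PTree.Vx ts[i.1]) := by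
    rw [← PTree.card_vx, PTree.card_vx_node, Nat.add_sub_cancel]
  rw [PTree.surjCount_node, hcard, ← Fin.prod_univ_fun_getElem, ← Fin.prod_univ_fun_getElem]
  simpa only [PTree.card_vx, PTree.surjCount_eq_numLinearExtensions] using key
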